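/- arXiv:1908.01533 — 2 statements merged into one kernel-verified Lean document; each statement's English description precedes it below -/
import Mathlib

section
/- Skeleton (cross) decomposition of a low-rank matrix: let F be a real m×n matrix with rank(F) = r, and let I : Fin r → Fin m and J : Fin r → Fin n be index maps such that the r×r intersection submatrix F(I,J) is invertible. Then F is exactly recovered from its sampled columns and rows: F = F(:,J) · (F(I,J))⁻¹ · F(I,:), where F(:,J) is the m×r matrix of columns indexed by J and F(I,:) is the r×n matrix of rows indexed by I. -/
open Matrix

/-!
A vector in the column space of `F` is determined by its entries in the rows `I` as soon as
`F(I,:)` has the rank of `F`, by rank-nullity. Hence any identity between column combinations of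
`F` may be checked on the rows `I`, and there the skeleton formula reads
`F(I,:) = F(I,J) F(I,J)⁻¹ F(I,:)`.
-/

section RankSubmatrix

variable {m n k ι R : Type*} [Fintype n] [CommRing R] [IsDomain R]

theorem injOn_comp_range_mulVecLin_of_rank_le (F : Matrix m n R) (I : ι → m)
    (h : F.rank ≤ (F.submatrix I id).rank) :
    Set.InjOn (fun v : m → R ↦ v ∘ I) F.mulVecLin.range := by
  refine (LinearMap.disjoint_ker_iff_injOn (f := LinearMap.funLeft R R I)).mp
    (Submodule.disjoint_ker_of_finrank_le _ ?_)
  rwa [← LinearMap.range_comp]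

theorem mul_eq_mul_of_submatrix_mul_eq_of_rank_le {F : Matrix m n R} {I : ι → m}
    (h : F.rank ≤ (F.submatrix I id).rank) {X Y : Matrix n k R}
    (hXY : F.submatrix I id * X = F.submatrix I id * Y) : F * X = F * Y := by
  refine Matrix.ext_col fun j ↦ ?_
  exact injOn_comp_range_mulVecLin_of_rank_le F I h ⟨X.col j, rfl⟩ ⟨Y.col j, rfl⟩
    (congrArg (fun M ↦ M.col j) hXY)

end RankSubmatrix

theorem skeleton_cross_decomposition_general {m n ι R : Type*} [Fintype n] [Fintype ι]
    [DecidableEq ι] [CommRing R] [IsDomain R] (F : Matrix m n R) (I : ι → m) (J : ι → n)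
    (hrank : F.rank ≤ Fintype.card ι) (hinv : IsUnit (F.submatrix I J).det) :
    F = F.submatrix id J * (F.submatrix I J)⁻¹ * F.submatrix I id := by
  classical
  have hrows : F.rank ≤ (F.submatrix I id).rank :=
    calc F.rank ≤ Fintype.card ι := hrank
      _ = (F.submatrix I J).rank :=
        (rank_of_isUnit _ ((isUnit_iff_isUnit_det _).mpr hinv)).symm
      _ ≤ (F.submatrix I id).rank := rank_submatrix_le (F.submatrix I id) id J
  let P : Matrix n ι R := (1 : Matrix n n R).submatrix id J
  have hF : F * P = F.submatrix id J := mul_submatrix_one (Equiv.refl n) J F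
  have hFI : F.submatrix I id * P = F.submatrix I J :=
    mul_submatrix_one (Equiv.refl n) J (F.submatrix I id)
  have hmul : F * (1 : Matrix n n R) = F * (P * (F.submatrix I J)⁻¹ * F.submatrix I id) := by
    apply mul_eq_mul_of_submatrix_mul_eq_of_rank_le hrows
    rw [← Matrix.mul_assoc, ← Matrix.mul_assoc, hFI, mul_nonsing_inv _ hinv, Matrix.mul_one,
      Matrix.one_mul]
  rwa [Matrix.mul_one, ← Matrix.mul_assoc, ← Matrix.mul_assoc, hF] at hmul

/-- Skeleton (cross) decomposition of a low-rank matrix: if `rank F = r`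
and the `r×r` intersection submatrix `F(I,J)` is invertible, then
`F = F(:,J) · F(I,J)⁻¹ · F(I,:)`. -/
theorem skeleton_cross_decomposition
    (m n r : ℕ) (F : Matrix (Fin m) (Fin n) ℝ) (hrank : F.rank = r)
    (I : Fin r → Fin m) (J : Fin r → Fin n)
    (hinv : IsUnit (F.submatrix I J).det) :
    F = F.submatrix id J * (F.submatrix I J)⁻¹ * F.submatrix I id :=
  skeleton_cross_decomposition_general F I J (by simp [hrank]) hinv
end

section
/- Let γ > 0, c > 0, and let 𝒫 : ℝ → ℝ be an odd, strictly monotonically increasing continuous function whose range is the open interval (−c, c), so that 𝒫 is a bijection from ℝ onto (−c, c) with inverse 𝒫⁻¹ : (−c,c) → ℝ. Define the control penalty W(u) = 2γ ∫₀ᵘ 𝒫⁻¹(μ) dμ for u ∈ (−c, c), and let b ∈ ℝ. Then the function u ↦ u·b + W(u) on (−c, c) attains a global minimum at the unique point u* = −𝒫(b/(2γ)). -/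
open Set intervalIntegral

/-!
The first-order condition `b + 2γ 𝒫⁻¹(u*) = 0` gives `u* = 𝒫(-b/(2γ))`. Substituting it for `b`, the
excess of the cost at `u` over the cost at `u*` becomes
`2γ (∫ μ in u*..u, 𝒫⁻¹(μ) dμ - (u - u*) 𝒫⁻¹(u*))`, which is `2γ` times the gap at `u` between a
primitive of the strictly increasing function `𝒫⁻¹` and its tangent line at `u*`.
-/

theorem strictMonoOn_range_of_leftInverse {α β : Type*} [LinearOrder α] [Preorder β]
    {f : α → β} {g : β → α} (hf : StrictMono f) (hg : Function.LeftInverse g f) :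
    StrictMonoOn g (range f) := by
  rintro _ ⟨x, rfl⟩ _ ⟨y, rfl⟩ hxy
  rw [hg x, hg y]
  exact hf.lt_iff_lt.1 hxy

theorem integral_lt_integral_of_lt_on_Ioo {f g : ℝ → ℝ} {a b : ℝ} (hab : a < b)
    (hf : IntervalIntegrable f MeasureTheory.volume a b)
    (hg : IntervalIntegrable g MeasureTheory.volume a b) (hfg : ∀ x ∈ Ioo a b, f x < g x) :
    ∫ x in a..b, f x < ∫ x in a..b, g x := by
  rw [← sub_pos, ← integral_sub hg hf]
  exact intervalIntegral_pos_of_pos_on (hg.sub hf) (fun x hx => sub_pos.2 (hfg x hx)) hab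

theorem sub_mul_lt_integral_of_strictMonoOn {g : ℝ → ℝ} {a u : ℝ}
    (hg : StrictMonoOn g (uIcc a u)) (hne : u ≠ a) :
    (u - a) * g a < ∫ x in a..u, g x := by
  have hint : IntervalIntegrable g MeasureTheory.volume a u := hg.monotoneOn.intervalIntegrable
  rcases hne.lt_or_gt with hua | hau
  · rw [uIcc_of_ge hua.le] at hg
    have hlt : ∫ x in u..a, g x < ∫ _ in u..a, g a :=
      integral_lt_integral_of_lt_on_Ioo hua hint.symm intervalIntegrable_const fun x hx =>
        hg (Ioo_subset_Icc_self hx) (right_mem_Icc.2 hua.le) hx.2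
    rw [integral_const, smul_eq_mul] at hlt
    rw [integral_symm]
    linarith
  · rw [uIcc_of_le hau.le] at hg
    have hlt : ∫ _ in a..u, g a < ∫ x in a..u, g x :=
      integral_lt_integral_of_lt_on_Ioo hau intervalIntegrable_const hint fun x hx =>
        hg (left_mem_Icc.2 hau.le) (Ioo_subset_Icc_self hx) hx.1
    rwa [integral_const, smul_eq_mul] at hlt

theorem penalized_hamiltonian_minimizer_general {γ a : ℝ} (hγ : 0 < γ) {P Pinv : ℝ → ℝ}
    (hmono : StrictMono P) (hcont : Continuous P) (hinv : Function.LeftInverse Pinv P)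
    (ha : a ∈ range P) (b : ℝ) :
    let W : ℝ → ℝ := fun u => 2 * γ * ∫ μ in a..u, Pinv μ
    let ustar : ℝ := P (-(b / (2 * γ)))
    ∀ u ∈ range P, u ≠ ustar → ustar * b + W ustar < u * b + W u := by
  intro W ustar u hu hne
  have hmem : ustar ∈ range P := mem_range_self _
  have hPinv {v w : ℝ} (hv : v ∈ range P) (hw : w ∈ range P) : StrictMonoOn Pinv (uIcc v w) :=
    (strictMonoOn_range_of_leftInverse hmono hinv).mono
      ((isPreconnected_range hcont).ordConnected.uIcc_subset hv hw)
  have hb : b = -(2 * γ * Pinv ustar) := by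
    rw [hinv]
    field_simp
  have hW : W u - W ustar = 2 * γ * ∫ μ in ustar..u, Pinv μ := by
    rw [← mul_sub, integral_interval_sub_left (hPinv ha hu).monotoneOn.intervalIntegrable
      (hPinv ha hmem).monotoneOn.intervalIntegrable]
  suffices 0 < u * b + W u - (ustar * b + W ustar) from sub_pos.1 this
  calc
    0 < 2 * γ * ((∫ μ in ustar..u, Pinv μ) - (u - ustar) * Pinv ustar) :=
      mul_pos (mul_pos two_pos hγ)
        (sub_pos.2 (sub_mul_lt_integral_of_strictMonoOn (hPinv hmem hu) hne))
    _ = u * b + W u - (ustar * b + W ustar) := by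
      linear_combination -hW - (u - ustar) * hb

/-- For an odd, strictly increasing continuous `𝒫 : ℝ → ℝ` with range
`(−c, c)` and inverse `𝒫⁻¹`, the function `u ↦ ub + W(u)` with control penalty
`W(u) = 2γ ∫₀ᵘ 𝒫⁻¹(μ) dμ` attains its global minimum over `(−c, c)` at the unique
point `u* = −𝒫(b/(2γ))`. -/
theorem penalized_hamiltonian_minimizer
    (γ c : ℝ) (hγ : 0 < γ) (hc : 0 < c)
    (P Pinv : ℝ → ℝ)
    (hodd : ∀ x, P (-x) = -P x)
    (hmono : StrictMono P)
    (hcont : Continuous P)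
    (hrange : Set.range P = Set.Ioo (-c) c)
    (hinv : ∀ x, Pinv (P x) = x)
    (b : ℝ) :
    let W : ℝ → ℝ := fun u => 2 * γ * ∫ μ in (0 : ℝ)..u, Pinv μ
    let ustar : ℝ := -P (b / (2 * γ))
    ustar ∈ Set.Ioo (-c) c ∧
      ∀ u ∈ Set.Ioo (-c) c, u ≠ ustar →
        ustar * b + W ustar < u * b + W u := by
  have hzero : 0 ∈ range P := hrange ▸ ⟨neg_lt_zero.2 hc, hc⟩
  simpa only [hodd, hrange] using And.intro (mem_range_self (f := P) (-(b / (2 * γ))))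
    (penalized_hamiltonian_minimizer_general hγ hmono hcont hinv hzero b)
end
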